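/- Let α ∈ 𝕀 be an irrational power series and (Q_k)_{k≥1} the denominators of its continued fraction convergents. Then α is singular on average if and only if ‖Q_k‖^{1/k} tends to infinity as k → ∞. -/

import Mathlib

/-!
Common setup: the field `𝔽_q((z⁻¹))` of formal power series over a finite field `K` of
cardinality `q`, modeled as the field `FF K` of formal Laurent series in `t = z⁻¹`,
together with its non-Archimedean norm, the embedding of the polynomial ring `𝔽_q[z]`,
distances to polynomial (vectors), Diophantine exponents, `Bad` sets, continued fractions
and best approximation sequences.
-/

open scoped Classical ENNReal NNReal
open Filter

noncomputable section

namespace FPSDA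

variable (K : Type*) [Field K] [Fintype K]

/-- The field `𝔽_q((z⁻¹))` of formal power series in `z⁻¹` over the finite field `K = 𝔽_q`,
modeled as the field of formal Laurent series in the variable `t = z⁻¹`. -/
def FF : Type _ := LaurentSeries K

instance : Field (FF K) := inferInstanceAs (Field (LaurentSeries K))

variable {K}

/-- The identity map, viewing an element of `𝔽_q((z⁻¹))` as a Laurent series in `t = z⁻¹`. -/
def toL (x : FF K) : LaurentSeries K := x

@[simp] lemma toL_zero : toL (0 : FF K) = 0 := rfl
@[simp] lemma toL_add (x y : FF K) : toL (x + y) = toL x + toL y := rfl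
@[simp] lemma toL_neg (x : FF K) : toL (-x) = -toL x := rfl
@[simp] lemma toL_sub (x y : FF K) : toL (x - y) = toL x - toL y := rfl
lemma toL_eq_zero {x : FF K} : toL x = 0 ↔ x = 0 := Iff.rfl

/-- The norm `‖x‖ = q ^ (deg x)` on `𝔽_q((z⁻¹))`, where
`deg x = - (order of x as a Laurent series in z⁻¹)`; `‖0‖ = 0`. -/
def fnorm (x : FF K) : ℝ :=
  if toL x = 0 then 0 else (Fintype.card K : ℝ) ^ (-(toL x).order)

lemma one_le_q : (1 : ℝ) ≤ (Fintype.card K : ℝ) := by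
  exact_mod_cast Fintype.card_pos

lemma fnorm_nonneg (x : FF K) : 0 ≤ fnorm x := by
  unfold fnorm
  split_ifs
  · exact le_refl 0
  · exact zpow_nonneg (by positivity) _

lemma fnorm_eq_zero {x : FF K} : fnorm x = 0 ↔ x = 0 := by
  unfold fnorm
  split_ifs with h
  · exact ⟨fun _ => toL_eq_zero.mp h, fun _ => rfl⟩
  · constructor
    · intro hc
      exact absurd hc (zpow_ne_zero _ (by
        have h0 : (0:ℝ) < (Fintype.card K : ℝ) := by positivity
        exact ne_of_gt h0))
    · intro hc
      exact absurd (toL_eq_zero.mpr hc) h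

lemma fnorm_neg (x : FF K) : fnorm (-x) = fnorm x := by
  unfold fnorm
  rw [toL_neg]
  simp [neg_eq_zero, HahnSeries.order_neg]

lemma fnorm_add_le (x y : FF K) : fnorm (x + y) ≤ max (fnorm x) (fnorm y) := by
  by_cases hxy : x + y = 0
  · rw [fnorm_eq_zero.mpr hxy]
    exact le_max_of_le_left (fnorm_nonneg x)
  by_cases hx : x = 0
  · rw [hx, zero_add]
    exact le_max_right _ _
  by_cases hy : y = 0
  · rw [hy, add_zero]
    exact le_max_left _ _
  have horder : min (toL x).order (toL y).order ≤ (toL (x + y)).order := by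
    rw [toL_add]
    exact HahnSeries.min_order_le_order_add (show toL x + toL y ≠ 0 from hxy)
  have h1 : fnorm (x + y) = (Fintype.card K : ℝ) ^ (-(toL (x+y)).order) := by
    unfold fnorm
    rw [if_neg (show toL (x + y) ≠ 0 from hxy)]
  rcases le_total (toL x).order (toL y).order with h | h
  · have h2 : (toL x).order ≤ (toL (x+y)).order := le_trans (by simp [min_eq_left h]) horder
    refine le_max_of_le_left ?_
    rw [h1]
    unfold fnorm
    rw [if_neg (show toL x ≠ 0 from hx)]
    exact zpow_le_zpow_right₀ one_le_q (by omega)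
  · have h2 : (toL y).order ≤ (toL (x+y)).order := le_trans (by simp [min_eq_right h]) horder
    refine le_max_of_le_right ?_
    rw [h1]
    unfold fnorm
    rw [if_neg (show toL y ≠ 0 from hy)]
    exact zpow_le_zpow_right₀ one_le_q (by omega)

/-- The (ultra)metric `dist x y = ‖x - y‖` on `𝔽_q((z⁻¹))`. -/
instance : MetricSpace (FF K) where
  dist x y := fnorm (x - y)
  dist_self x := by
    show fnorm (x - x) = 0
    rw [sub_self]
    exact fnorm_eq_zero.mpr rfl
  dist_comm x y := by
    show fnorm (x - y) = fnorm (y - x)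
    have h : x - y = -(y - x) := by ring
    rw [h, fnorm_neg]
  dist_triangle x y z := by
    show fnorm (x - z) ≤ fnorm (x - y) + fnorm (y - z)
    have h : x - z = (x - y) + (y - z) := by ring
    calc fnorm (x - z) ≤ max (fnorm (x - y)) (fnorm (y - z)) := by
          rw [h]; exact fnorm_add_le _ _
      _ ≤ fnorm (x - y) + fnorm (y - z) :=
        max_le (le_add_of_nonneg_right (fnorm_nonneg _)) (le_add_of_nonneg_left (fnorm_nonneg _))
  eq_of_dist_eq_zero := by
    intro x y h
    have h' : x - y = 0 := fnorm_eq_zero.mp h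
    exact sub_eq_zero.mp h'

instance : MeasurableSpace (FF K) := borel _
instance : BorelSpace (FF K) := ⟨rfl⟩

/-- The canonical embedding of the polynomial ring `𝔽_q[z]` into `𝔽_q((z⁻¹))`:
the variable `z` is sent to `t⁻¹ = single (-1) 1`. -/
def polyF (P : Polynomial K) : FF K :=
  Polynomial.aeval (HahnSeries.single (-1 : ℤ) (1 : K)) P

/-- Supremum norm of a vector with entries in `𝔽_q((z⁻¹))`. -/
def vnorm {ι : Type*} [Fintype ι] (v : ι → FF K) : ℝ := ⨆ i, fnorm (v i)

/-- `⟨v⟩`, the distance from the vector `v` to the nearest polynomial vector. -/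
def vdist {ι : Type*} [Fintype ι] (v : ι → FF K) : ℝ :=
  ⨅ y : ι → Polynomial K, vnorm (fun i => v i - polyF (y i))

/-- `⟨x⟩`, the distance from the scalar `x` to the nearest polynomial. -/
def sdist (x : FF K) : ℝ := ⨅ y : Polynomial K, fnorm (x - polyF y)

/-- The fractional part `{x} = Σ_{i ≥ 1} a_i z^{-i}` of `x = Σ_i a_i z^{-i}`. -/
def fracPart (x : FF K) : FF K :=
  (⟨fun i => if 1 ≤ i then (toL x).coeff i else 0, (toL x).isPWO_support'.mono (by
      intro i hi
      by_cases h : (1:ℤ) ≤ i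
      · simpa [Function.mem_support, h] using hi
      · simp [Function.mem_support, h] at hi)⟩ : LaurentSeries K)

/-- The integer part `[x] = Σ_{i ≤ 0} a_i z^{-i}` of `x = Σ_i a_i z^{-i}`, as a polynomial
in `z`. -/
def intPoly (x : FF K) : Polynomial K :=
  ∑ i ∈ Finset.range ((-(toL x).order).toNat + 1),
    Polynomial.monomial i ((toL x).coeff (-(i : ℤ)))

/-- `x ∈ 𝔽_q((z⁻¹))` is irrational if it is not in `𝔽_q(z)`, i.e. is not a ratio of two
polynomials in `z`. -/
def FIrrational (x : FF K) : Prop :=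
  ∀ P Q : Polynomial K, Q ≠ 0 → x * polyF Q ≠ polyF P

section Exponents

variable {m n : ℕ}

/-- The norm `‖x‖ = max_j ‖x_j‖` of a polynomial vector `x`. -/
def pnorm {ι : Type*} [Fintype ι] (x : ι → Polynomial K) : ℝ :=
  vnorm (fun i => (polyF (x i) : FF K))

/-- The system `⟨A x - θ⟩ ≤ H^{-ω}`, `‖x‖ ≤ H` has a polynomial solution `x`. -/
def Solv (A : Matrix (Fin n) (Fin m) (FF K)) (θ : Fin n → FF K) (ω H : ℝ) : Prop :=
  ∃ x : Fin m → Polynomial K,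
    vdist (A.mulVec (fun j => polyF (x j)) - θ) ≤ H ^ (-ω) ∧ pnorm x ≤ H

/-- The system `⟨A x⟩ ≤ H^{-ω}`, `‖x‖ ≤ H` has a nonzero polynomial solution `x`. -/
def SolvHom (A : Matrix (Fin n) (Fin m) (FF K)) (ω H : ℝ) : Prop :=
  ∃ x : Fin m → Polynomial K, x ≠ 0 ∧
    vdist (A.mulVec (fun j => polyF (x j))) ≤ H ^ (-ω) ∧ pnorm x ≤ H

/-- The inhomogeneous exponent `ω(A, θ)`: the supremum (in `[0,∞]`) of all `ω` such that
for arbitrarily large `H` the system `⟨A x - θ⟩ ≤ H^{-ω}`, `‖x‖ ≤ H` has a polynomial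
solution. -/
def omegaInhom (A : Matrix (Fin n) (Fin m) (FF K)) (θ : Fin n → FF K) : ℝ≥0∞ :=
  ⨆ (ω : ℝ) (_ : ∀ H₀ : ℝ, ∃ H : ℝ, H₀ ≤ H ∧ Solv A θ ω H), ENNReal.ofReal ω

/-- The uniform inhomogeneous exponent `ω̂(A, θ)`: as `ω(A, θ)`, but with a solution for
all sufficiently large `H`. -/
def omegaHatInhom (A : Matrix (Fin n) (Fin m) (FF K)) (θ : Fin n → FF K) : ℝ≥0∞ :=
  ⨆ (ω : ℝ) (_ : ∃ H₀ : ℝ, ∀ H : ℝ, H₀ ≤ H → Solv A θ ω H), ENNReal.ofReal ω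

/-- The homogeneous exponent `ω(A)`. -/
def omegaHom (A : Matrix (Fin n) (Fin m) (FF K)) : ℝ≥0∞ :=
  ⨆ (ω : ℝ) (_ : ∀ H₀ : ℝ, ∃ H : ℝ, H₀ ≤ H ∧ SolvHom A ω H), ENNReal.ofReal ω

/-- The uniform homogeneous exponent `ω̂(A)`. -/
def omegaHatHom (A : Matrix (Fin n) (Fin m) (FF K)) : ℝ≥0∞ :=
  ⨆ (ω : ℝ) (_ : ∃ H₀ : ℝ, ∀ H : ℝ, H₀ ≤ H → SolvHom A ω H), ENNReal.ofReal ω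

/-- `A` is non-degenerate: the `𝔽_q[z]`-module `Aᵀ 𝔽_q[z]ⁿ + 𝔽_q[z]^m ⊆ 𝔽_q((z⁻¹))^m` has
rank `m + n` over `𝔽_q[z]`, i.e. its `m + n` natural generators are linearly independent
over `𝔽_q[z]`; equivalently, no nonzero polynomial vector `u` makes `Aᵀ u` a polynomial
vector. -/
def Nondegenerate (A : Matrix (Fin n) (Fin m) (FF K)) : Prop :=
  ∀ u : Fin n → Polynomial K,
    (∃ v : Fin m → Polynomial K,
      A.transpose.mulVec (fun i => polyF (u i)) = fun j => polyF (v j)) → u = 0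

/-- `liminf_{x ∈ 𝔽_q[z]^m, ‖x‖ → ∞} ‖x‖^{m/n} ⟨A x - θ⟩`, computed in `[0, ∞]`. -/
def badLiminf (A : Matrix (Fin n) (Fin m) (FF K)) (θ : Fin n → FF K) : ℝ≥0∞ :=
  Filter.liminf
    (fun x : Fin m → Polynomial K =>
      ENNReal.ofReal ((pnorm x) ^ ((m : ℝ) / (n : ℝ)) *
        vdist (A.mulVec (fun j => polyF (x j)) - θ)))
    (Filter.comap (fun x : Fin m → Polynomial K => pnorm x) Filter.atTop)

/-- The set `Bad^ε(A)` of `θ` in the unit polydisc `𝕀ⁿ` with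
`liminf_{‖x‖ → ∞} ‖x‖^{m/n} ⟨A x - θ⟩ ≥ ε`. -/
def Bad (A : Matrix (Fin n) (Fin m) (FF K)) (ε : ℝ) : Set (Fin n → FF K) :=
  {θ | (∀ i, fnorm (θ i) < 1) ∧ ENNReal.ofReal ε ≤ badLiminf A θ}

/-- The set `Bad(A) = ⋃_{ε > 0} Bad^ε(A)`. -/
def BadAll (A : Matrix (Fin n) (Fin m) (FF K)) : Set (Fin n → FF K) :=
  ⋃ (ε : ℝ) (_ : 0 < ε), Bad A ε

/-- `M(y) = ⟨Aᵀ y⟩` for a polynomial vector `y`. -/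
def Mfun (A : Matrix (Fin n) (Fin m) (FF K)) (y : Fin n → Polynomial K) : ℝ :=
  vdist (A.transpose.mulVec (fun i => polyF (y i)))

/-- `y 1, y 2, …` is a sequence of best approximations related to `Aᵀ`:
`1 = Y_1 < Y_2 < ⋯`, `M_1 > M_2 > ⋯`, and `M(x) ≥ M_k` for every nonzero polynomial
vector `x` with `‖x‖ < Y_{k+1}` (the value `y 0` is irrelevant). -/
def IsBestApproxSeq (A : Matrix (Fin n) (Fin m) (FF K))
    (y : ℕ → Fin n → Polynomial K) : Prop :=
  pnorm (y 1) = 1 ∧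
  (∀ k, 1 ≤ k → pnorm (y k) < pnorm (y (k + 1))) ∧
  (∀ k, 1 ≤ k → Mfun A (y (k + 1)) < Mfun A (y k)) ∧
  (∀ k, 1 ≤ k → ∀ x : Fin n → Polynomial K, x ≠ 0 → pnorm x < pnorm (y (k + 1)) →
    Mfun A (y k) ≤ Mfun A x)

end Exponents

section Scalar

/-- The system `⟨ξ x - θ⟩ ≤ H^{-ω}`, `‖x‖ ≤ H` has a polynomial solution `x`. -/
def sSolv (ξ θ : FF K) (ω H : ℝ) : Prop :=
  ∃ x : Polynomial K, sdist (ξ * polyF x - θ) ≤ H ^ (-ω) ∧ fnorm (polyF x) ≤ H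

/-- The scalar inhomogeneous exponent `ω((ξ), θ)`. -/
def somegaInhom (ξ θ : FF K) : ℝ≥0∞ :=
  ⨆ (ω : ℝ) (_ : ∀ H₀ : ℝ, ∃ H : ℝ, H₀ ≤ H ∧ sSolv ξ θ ω H), ENNReal.ofReal ω

/-- The scalar uniform inhomogeneous exponent `ω̂((ξ), θ)`. -/
def somegaHatInhom (ξ θ : FF K) : ℝ≥0∞ :=
  ⨆ (ω : ℝ) (_ : ∃ H₀ : ℝ, ∀ H : ℝ, H₀ ≤ H → sSolv ξ θ ω H), ENNReal.ofReal ω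

/-- The scalar homogeneous exponent `ω((ξ))`. -/
def somegaHom (ξ : FF K) : ℝ≥0∞ :=
  ⨆ (ω : ℝ) (_ : ∀ H₀ : ℝ, ∃ H : ℝ, H₀ ≤ H ∧ ∃ x : Polynomial K, x ≠ 0 ∧
      sdist (ξ * polyF x) ≤ H ^ (-ω) ∧ fnorm (polyF x) ≤ H), ENNReal.ofReal ω

/-- `liminf_{x ∈ 𝔽_q[z], ‖x‖ → ∞} ‖x‖ ⟨α x - θ⟩`, computed in `[0, ∞]`. -/
def sBadLiminf (α θ : FF K) : ℝ≥0∞ :=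
  Filter.liminf
    (fun x : Polynomial K => ENNReal.ofReal (fnorm (polyF x) * sdist (α * polyF x - θ)))
    (Filter.comap (fun x : Polynomial K => fnorm (polyF x)) Filter.atTop)

/-- The set `Bad^ε(α)` of `θ ∈ 𝕀` with `liminf_{‖x‖ → ∞} ‖x‖ ⟨α x - θ⟩ ≥ ε`. -/
def sBad (α : FF K) (ε : ℝ) : Set (FF K) :=
  {θ | fnorm θ < 1 ∧ ENNReal.ofReal ε ≤ sBadLiminf α θ}

end Scalar

section CF

/-- The Gauss map `T x = 1/x - [1/x]` on `𝔽_q((z⁻¹))`. -/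
def gaussMap (x : FF K) : FF K := fracPart x⁻¹

/-- `pquot α k` is the `(k+1)`-st partial quotient `A_{k+1} = [1 / T^k α]` of the
continued fraction expansion of `α`. -/
def pquot (α : FF K) (k : ℕ) : Polynomial K := intPoly ((gaussMap^[k] α)⁻¹)

/-- `cfQ α k` is the denominator `Q_k` of the `k`-th convergent of the continued fraction
expansion of `α`: `Q_0 = 1`, `Q_1 = A_1`, `Q_{k+2} = A_{k+2} Q_{k+1} + Q_k`. -/
def cfQ (α : FF K) : ℕ → Polynomial K
  | 0 => 1
  | 1 => pquot α 0
  | (k + 2) => pquot α (k + 1) * cfQ α (k + 1) + cfQ α k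

/-- `α` is singular on average: for every `c > 0` the proportion of `l ∈ {1, …, N}` for
which `‖{Q α}‖ ≤ c 2^{-l}` has a solution `Q ∈ 𝔽_q[z]` with `0 < ‖Q‖ ≤ 2^l` tends to `1`
as `N → ∞`. -/
def SingularOnAverage (α : FF K) : Prop :=
  ∀ c : ℝ, 0 < c →
    Filter.Tendsto
      (fun N : ℕ =>
        (((Finset.Icc 1 N).filter (fun l : ℕ =>
            ∃ Q : Polynomial K, Q ≠ 0 ∧ fnorm (polyF Q) ≤ 2 ^ l ∧
              fnorm (fracPart (polyF Q * α)) ≤ c / 2 ^ l)).card : ℝ) / (N : ℝ))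
      Filter.atTop (nhds 1)

end CF

end FPSDA

open FPSDA MeasureTheory

/-!
The convergents are best approximations: `‖{Q_k α}‖ = 1 / ‖Q_{k+1}‖`, and `‖{Q α}‖` is at least this
for every nonzero `Q` with `‖Q‖ < ‖Q_{k+1}‖`. So `l` fails the condition in the definition of
singularity on average exactly when no `k` has `‖Q_k‖ ≤ 2 ^ l ≤ c ‖Q_{k+1}‖`. Since the norms
`‖Q_k‖` at least double at each step, these bad `l` are, up to finitely many bounded shifts, the
exponents `⌈log₂ ‖Q_k‖⌉`, which increase strictly with `k`. The latter have density zero if and only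
if `log ‖Q_k‖ / k → ∞`.
-/

namespace FPSDA

open Asymptotics Set Topology

section Density

/-- A set of natural numbers of natural density zero: it has `o(N)` elements below `N`. -/
def HasZeroDensity (A : Set ℕ) : Prop :=
  (fun N => (Nat.count (· ∈ A) N : ℝ)) =o[atTop] fun N => (N : ℝ)

lemma HasZeroDensity.mono {A B : Set ℕ} (hB : HasZeroDensity B) (hAB : A ⊆ B) :
    HasZeroDensity A :=
  (IsBigO.of_norm_le fun N => by
    simpa using Nat.count_mono_left fun k _ hk => hAB hk).trans_isLittleO hB

lemma HasZeroDensity.biUnion {ι : Type*} {s : Finset ι} {A : ι → Set ℕ}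
    (hA : ∀ i ∈ s, HasZeroDensity (A i)) : HasZeroDensity (⋃ i ∈ s, A i) := by
  refine (IsBigO.of_norm_le fun N => ?_).trans_isLittleO (IsLittleO.sum hA)
  have hcount : Nat.count (· ∈ ⋃ i ∈ s, A i) N ≤ ∑ i ∈ s, Nat.count (· ∈ A i) N := by
    simp only [Nat.count_eq_card_filter_range]
    refine (Finset.card_le_card fun n hn => ?_).trans Finset.card_biUnion_le
    simp only [Finset.mem_filter, Finset.mem_biUnion, mem_iUnion, exists_prop] at hn ⊢
    exact hn.2.imp fun i hi => ⟨hi.1, hn.1, hi.2⟩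
  rw [Real.norm_natCast]
  simpa only [Finset.sum_apply, Nat.cast_sum] using (Nat.cast_le (α := ℝ)).mpr hcount

lemma abs_count_add_sub_count_le (p : ℕ → Prop) (j N : ℕ) :
    |(Nat.count (fun l => p (j + l)) N - Nat.count p N : ℝ)| ≤ j := by
  have hleft : Nat.count p (j + N) = Nat.count p j + Nat.count (fun l => p (j + l)) N :=
    Nat.count_add p j N
  have hright : Nat.count p (j + N) = Nat.count p N + Nat.count (fun l => p (N + l)) j := by
    rw [add_comm, Nat.count_add]
  have hj : Nat.count p j ≤ j := Nat.count_le _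
  have hj' : Nat.count (fun l => p (N + l)) j ≤ j := Nat.count_le _
  rw [abs_le]
  have hle : (Nat.count p N : ℝ) ≤ Nat.count (fun l => p (j + l)) N + j := mod_cast (by omega)
  have hge : (Nat.count (fun l => p (j + l)) N : ℝ) ≤ Nat.count p N + j := mod_cast (by omega)
  constructor <;> linarith

lemma hasZeroDensity_preimage_add_iff {A : Set ℕ} (j : ℕ) :
    HasZeroDensity ((j + ·) ⁻¹' A) ↔ HasZeroDensity A := by
  have hdiff : (fun N => (Nat.count (· ∈ (j + ·) ⁻¹' A) N - Nat.count (· ∈ A) N : ℝ))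
      =o[atTop] fun N => (N : ℝ) :=
    (IsBigO.of_norm_le (g := fun _ => (j : ℝ))
      (abs_count_add_sub_count_le (· ∈ A) j)).trans_isLittleO
      (isLittleO_const_left.mpr (.inr (tendsto_norm_atTop_atTop.comp tendsto_natCast_atTop_atTop)))
  refine ⟨fun h => ?_, fun h => ?_⟩
  · simpa [HasZeroDensity] using h.sub hdiff
  · simpa [HasZeroDensity] using hdiff.add h

lemma count_one_add_eq_card_filter_Icc (p : ℕ → Prop) (N : ℕ) :
    Nat.count (fun l => p (1 + l)) N = ((Finset.Icc 1 N).filter p).card := by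
  have hIcc : Finset.Icc 1 N = (Finset.range N).map (addLeftEmbedding 1) := by
    ext l
    simp only [Finset.mem_Icc, Finset.mem_map, Finset.mem_range, addLeftEmbedding_apply]
    exact ⟨fun h => ⟨l - 1, by omega, by omega⟩, by omega⟩
  rw [Nat.count_eq_card_filter_range, hIcc, Finset.filter_map, Finset.card_map]
  rfl

lemma tendsto_card_filter_div_iff_hasZeroDensity_compl (p : ℕ → Prop) :
    Tendsto (fun N : ℕ => (((Finset.Icc 1 N).filter p).card : ℝ) / N) atTop (𝓝 1) ↔
      HasZeroDensity {l | p l}ᶜ := by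
  have hsum : ∀ N : ℕ, 0 < N → (Nat.count (· ∈ (1 + ·) ⁻¹' {l | p l}ᶜ) N : ℝ) / N =
      1 - (((Finset.Icc 1 N).filter p).card : ℝ) / N := fun N hN => by
    have hcard := Finset.card_filter_add_card_filter_not (s := Finset.Icc 1 N) p
    have hcount : Nat.count (· ∈ (1 + ·) ⁻¹' {l | p l}ᶜ) N =
        ((Finset.Icc 1 N).filter (¬p ·)).card := by
      convert count_one_add_eq_card_filter_Icc (¬p ·) N
      exact Iff.rfl
    rw [Nat.card_Icc, Nat.add_sub_cancel, ← hcount] at hcard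
    rw [eq_sub_iff_add_eq', ← add_div, div_eq_one_iff_eq (by positivity)]
    exact_mod_cast hcard
  rw [← hasZeroDensity_preimage_add_iff 1, HasZeroDensity,
    isLittleO_iff_tendsto' (.of_forall fun N hN => by simp [Nat.cast_eq_zero.mp hN]),
    tendsto_congr' (eventually_gt_atTop 0 |>.mono hsum)]
  exact ⟨fun h => by simpa using h.const_sub 1, fun h => by simpa using h.const_sub 1⟩

lemma count_range_apply {a : ℕ → ℕ} (ha : StrictMono a) (k : ℕ) :
    Nat.count (· ∈ range a) (a k) = k := by
  have himage : (Finset.range (a k)).filter (· ∈ range a) = (Finset.range k).image a := by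
    ext l
    simp only [Finset.mem_filter, Finset.mem_range, Finset.mem_image, mem_range]
    exact ⟨fun ⟨hl, i, hi⟩ => ⟨i, ha.lt_iff_lt.mp (hi ▸ hl), hi⟩,
      fun ⟨i, hik, hi⟩ => ⟨hi ▸ ha hik, i, hi⟩⟩
  rw [Nat.count_eq_card_filter_range, himage, Finset.card_image_of_injective _ ha.injective,
    Finset.card_range]

lemma exists_le_and_lt_succ {α : Type*} [LinearOrder α] {a : ℕ → α} {x : α} (h0 : a 0 ≤ x)
    (hx : ∃ n, x < a n) : ∃ k, a k ≤ x ∧ x < a (k + 1) := by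
  by_contra! h
  obtain ⟨n, hn⟩ := hx
  exact hn.not_ge (Nat.rec h0 h n)

lemma hasZeroDensity_range_iff {a : ℕ → ℕ} (ha : StrictMono a) :
    HasZeroDensity (range a) ↔ (fun k : ℕ => (k : ℝ)) =o[atTop] fun k : ℕ => (a k : ℝ) := by
  refine ⟨fun h => by
    simpa only [Function.comp_def, count_range_apply ha] using h.comp_tendsto ha.tendsto_atTop,
    fun h => isLittleO_iff.mpr fun ε hε => ?_⟩
  obtain ⟨k₀, hk₀⟩ := eventually_atTop.mp (h.bound (half_pos hε))
  filter_upwards [eventually_ge_atTop (a k₀), (tendsto_natCast_atTop_atTop.eventually_ge_atTop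
    (2 / ε) : ∀ᶠ N : ℕ in atTop, 2 / ε ≤ N)] with N hN hNε
  obtain ⟨k, hkN, hNk⟩ := exists_le_and_lt_succ (a := fun i => a (k₀ + i)) hN
    ⟨N + 1, (by omega : N < k₀ + (N + 1)).trans_le (ha.id_le _)⟩
  have hcount : Nat.count (· ∈ range a) N ≤ k₀ + (k + 1) := by
    simpa only [count_range_apply ha] using Nat.count_monotone (· ∈ range a) hNk.le
  have hk : ((k₀ + k : ℕ) : ℝ) ≤ ε / 2 * (a (k₀ + k) : ℝ) := by
    simpa only [Real.norm_natCast] using hk₀ (k₀ + k) (by omega)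
  rw [Real.norm_natCast, Real.norm_natCast]
  calc (Nat.count (· ∈ range a) N : ℝ) ≤ (k₀ + k : ℕ) + 1 := mod_cast hcount
    _ ≤ ε / 2 * N + ε / 2 * N := by
      gcongr ?_ + ?_
      · exact hk.trans (by gcongr)
      · rw [div_le_iff₀' hε] at hNε
        linarith
    _ = ε * N := by ring

end Density

section DyadicScales

/-- The least `l : ℕ` with `x ≤ 2 ^ l`. -/
def dyadicExponent (x : ℝ) : ℕ := ⌈Real.logb 2 x⌉₊

/-- The dyadic scales `l` lying in the gaps between consecutive terms of `X`, each gap shrunk at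
its upper end by the factor `c`. For `X k = ‖Q_k‖` these are the `l` for which the conditions
`‖Q‖ ≤ 2 ^ l` and `‖{Q α}‖ ≤ c / 2 ^ l` have a common nonzero solution `Q`. -/
def dyadicGaps (X : ℕ → ℝ) (c : ℝ) : Set ℕ := {l | ∃ k, X k ≤ 2 ^ l ∧ 2 ^ l ≤ c * X (k + 1)}

lemma dyadicExponent_le_iff {x : ℝ} (hx : 0 < x) {l : ℕ} : dyadicExponent x ≤ l ↔ x ≤ 2 ^ l := by
  rw [dyadicExponent, Nat.ceil_le, Real.logb_le_iff_le_rpow one_lt_two hx, Real.rpow_natCast]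

variable {X : ℕ → ℝ}

lemma one_le_of_two_mul_le_succ (h0 : 1 ≤ X 0) (hX : ∀ k, 2 * X k ≤ X (k + 1)) (k : ℕ) :
    1 ≤ X k := by
  induction k with
  | zero => exact h0
  | succ k ih => linarith [hX k]

lemma strictMono_of_two_mul_le_succ (h0 : 1 ≤ X 0) (hX : ∀ k, 2 * X k ≤ X (k + 1)) :
    StrictMono X :=
  strictMono_nat_of_lt_succ fun k => by linarith [hX k, one_le_of_two_mul_le_succ h0 hX k]

lemma dyadicExponent_two_mul {x : ℝ} (hx : 1 ≤ x) :
    dyadicExponent (2 * x) = dyadicExponent x + 1 := by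
  rw [dyadicExponent, Real.logb_mul two_ne_zero (by positivity), Real.logb_self_eq_one one_lt_two,
    add_comm, Nat.ceil_add_one (Real.logb_nonneg one_lt_two hx), dyadicExponent]

lemma strictMono_dyadicExponent (h0 : 1 ≤ X 0) (hX : ∀ k, 2 * X k ≤ X (k + 1)) :
    StrictMono fun k => dyadicExponent (X k) := by
  refine strictMono_nat_of_lt_succ fun k => ?_
  have hk := one_le_of_two_mul_le_succ h0 hX k
  calc dyadicExponent (X k) < dyadicExponent (2 * X k) := by
        rw [dyadicExponent_two_mul hk]; exact Nat.lt_succ_self _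
    _ ≤ dyadicExponent (X (k + 1)) := by
        unfold dyadicExponent
        gcongr
        exacts [one_lt_two, hX k]

lemma preimage_range_dyadicExponent_subset (h0 : 1 ≤ X 0) (hX : ∀ k, 2 * X k ≤ X (k + 1)) :
    (1 + ·) ⁻¹' range (fun k => dyadicExponent (X k)) ⊆ (dyadicGaps X (1 / 4))ᶜ := by
  rintro l ⟨k, hk : dyadicExponent (X k) = 1 + l⟩ ⟨j, hj, hj'⟩
  have hmono := strictMono_of_two_mul_le_succ h0 hX
  have hpos : ∀ k, 0 < X k := fun k => one_pos.trans_le (one_le_of_two_mul_le_succ h0 hX k)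
  have hlk : 2 ^ l < X k := lt_of_not_ge fun h => by
    have := (dyadicExponent_le_iff (hpos k)).mpr h
    omega
  have hkl : X k ≤ 2 ^ (1 + l) := (dyadicExponent_le_iff (hpos k)).mp hk.le
  have hjk : X (j + 1) ≤ X k := hmono.monotone (hmono.lt_iff_lt.mp (hj.trans_lt hlk))
  rw [pow_add] at hkl
  linarith [hpos k]

lemma compl_dyadicGaps_subset (h0 : X 0 = 1) (hX : ∀ k, 2 * X k ≤ X (k + 1)) {c : ℝ} {m : ℕ}
    (hm : 1 ≤ c * 2 ^ m) :
    (dyadicGaps X c)ᶜ ⊆ ⋃ j ∈ Finset.Icc 1 m, (j + ·) ⁻¹' range fun k => dyadicExponent (X k) := by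
  intro l hl
  have hmono := strictMono_dyadicExponent h0.ge hX
  have hpos : ∀ k, 0 < X k := fun k => one_pos.trans_le (one_le_of_two_mul_le_succ h0.ge hX k)
  obtain ⟨k, hkl, hlk⟩ := exists_le_and_lt_succ (a := fun k => dyadicExponent (X k)) (x := l)
    ((dyadicExponent_le_iff (hpos 0)).mpr (h0 ▸ one_le_pow₀ one_le_two))
    ⟨l + 1, l.lt_succ_self.trans_le (hmono.id_le _)⟩
  have hkX : c * X (k + 1) < 2 ^ l :=
    lt_of_not_ge fun h => hl ⟨k, (dyadicExponent_le_iff (hpos k)).mp hkl, h⟩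
  have hkm : X (k + 1) ≤ 2 ^ (l + m) := by
    calc X (k + 1) ≤ X (k + 1) * (c * 2 ^ m) := le_mul_of_one_le_right (hpos _).le hm
      _ = c * X (k + 1) * 2 ^ m := by ring
      _ ≤ 2 ^ l * 2 ^ m := by gcongr
      _ = 2 ^ (l + m) := (pow_add ..).symm
  have hkm' := (dyadicExponent_le_iff (hpos _)).mpr hkm
  simp only [mem_iUnion, Finset.mem_Icc, mem_preimage, mem_range, exists_prop]
  exact ⟨dyadicExponent (X (k + 1)) - l, by omega, k + 1, by omega⟩

lemma forall_hasZeroDensity_compl_dyadicGaps_iff (h0 : X 0 = 1)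
    (hX : ∀ k, 2 * X k ≤ X (k + 1)) :
    (∀ c > 0, HasZeroDensity (dyadicGaps X c)ᶜ) ↔
      HasZeroDensity (range fun k => dyadicExponent (X k)) := by
  refine ⟨fun h => ?_, fun h c hc => ?_⟩
  · exact (hasZeroDensity_preimage_add_iff 1).mp <|
      (h (1 / 4) (by norm_num)).mono (preimage_range_dyadicExponent_subset h0.ge hX)
  · obtain ⟨m, hm⟩ := pow_unbounded_of_one_lt (1 / c) one_lt_two
    rw [div_lt_iff₀' hc] at hm
    exact (HasZeroDensity.biUnion fun j _ => (hasZeroDensity_preimage_add_iff j).mpr h).mono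
      (compl_dyadicGaps_subset h0 hX hm.le)

lemma isLittleO_iff_tendsto_div_atTop {ι : Type*} {u : Filter ι} {f g : ι → ℝ}
    (hf : ∀ᶠ i in u, 0 < f i) (hg : ∀ᶠ i in u, 0 < g i) :
    f =o[u] g ↔ Tendsto (fun i => g i / f i) u atTop := by
  refine ⟨fun h => ?_, IsLittleO.of_tendsto_div_atTop⟩
  have hpos : ∀ᶠ i in u, 0 < f i / g i := (hf.and hg).mono fun i hi => div_pos hi.1 hi.2
  simpa only [Pi.inv_def, inv_div] using Filter.Tendsto.inv_tendsto_nhdsGT_zero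
    (tendsto_nhdsWithin_iff.mpr ⟨h.tendsto_div_nhds_zero, hpos⟩)

lemma isTheta_dyadicExponent_log {ι : Type*} {u : Filter ι} {f : ι → ℝ} (hf : Tendsto f u atTop) :
    (fun i => (dyadicExponent (f i) : ℝ)) =Θ[u] fun i => Real.log (f i) := by
  have hceil := (isEquivalent_nat_ceil (R := ℝ)).comp_tendsto
    ((Real.tendsto_logb_atTop one_lt_two).comp hf)
  refine hceil.isTheta.trans ?_
  simp only [Function.comp_def, Real.logb, div_eq_inv_mul]
  exact (isTheta_refl _ _).const_mul_left (inv_ne_zero (Real.log_pos one_lt_two).ne')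

lemma isLittleO_dyadicExponent_iff_tendsto_rpow (h0 : 1 ≤ X 0)
    (hX : ∀ k, 2 * X k ≤ X (k + 1)) :
    (fun k : ℕ => (k : ℝ)) =o[atTop] (fun k => (dyadicExponent (X k) : ℝ)) ↔
      Tendsto (fun k : ℕ => X k ^ (1 / (k : ℝ))) atTop atTop := by
  have htop := tendsto_atTop_of_geom_le (one_pos.trans_le h0) one_lt_two hX
  have hrpow : ∀ᶠ k : ℕ in atTop, X k ^ (1 / (k : ℝ)) = Real.exp (Real.log (X k) / k) :=
    (htop.eventually_gt_atTop 0).mono fun k hk => by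
      rw [Real.rpow_def_of_pos hk, mul_one_div]
  rw [tendsto_congr' hrpow, Real.tendsto_exp_comp_atTop,
    (isTheta_dyadicExponent_log htop).isLittleO_congr_right, isLittleO_iff_tendsto_div_atTop]
  · exact (eventually_gt_atTop 0).mono fun k hk => Nat.cast_pos.mpr hk
  · exact (htop.eventually_gt_atTop 1).mono fun k hk => Real.log_pos hk

end DyadicScales

section FractionalPart

variable {K : Type*} [Field K]

/-- The embedding `polyF` of `𝔽_q[z]` into `𝔽_q((z⁻¹))` as a ring homomorphism. -/
def polyHom : Polynomial K →+* FF K :=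
  (Polynomial.aeval (HahnSeries.single (-1 : ℤ) (1 : K)) :
    Polynomial K →ₐ[K] LaurentSeries K).toRingHom

lemma polyF_zero : polyF (0 : Polynomial K) = 0 :=
  map_zero polyHom

lemma polyF_one : polyF (1 : Polynomial K) = 1 :=
  map_one polyHom

lemma polyF_add (P Q : Polynomial K) : polyF (P + Q) = polyF P + polyF Q :=
  map_add polyHom P Q

lemma polyF_sub (P Q : Polynomial K) : polyF (P - Q) = polyF P - polyF Q :=
  map_sub polyHom P Q

lemma polyF_mul (P Q : Polynomial K) : polyF (P * Q) = polyF P * polyF Q :=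
  map_mul polyHom P Q

lemma coeff_toL_add (x y : FF K) (i : ℤ) :
    (toL (x + y)).coeff i = (toL x).coeff i + (toL y).coeff i := rfl

lemma toL_polyF_monomial (n : ℕ) (a : K) :
    toL (polyF (Polynomial.monomial n a)) = HahnSeries.single (-(n : ℤ)) a := by
  have haeval : toL (polyF (Polynomial.monomial n a)) =
      HahnSeries.single 0 a * HahnSeries.single (-1 : ℤ) (1 : K) ^ n :=
    (Polynomial.aeval_monomial ..).trans (congrArg (· * _) (LaurentSeries.algebraMap_apply K a))
  rw [haeval, HahnSeries.single_pow, HahnSeries.single_mul_single]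
  simp

lemma coeff_polyF (P : Polynomial K) (i : ℤ) :
    (toL (polyF P)).coeff i = if i ≤ 0 then P.coeff (-i).toNat else 0 := by
  induction P using Polynomial.induction_on' with
  | add P Q hP hQ =>
    rw [polyF_add, coeff_toL_add, hP, hQ, Polynomial.coeff_add]
    split_ifs <;> simp
  | monomial n a =>
    rw [toL_polyF_monomial, HahnSeries.coeff_single, Polynomial.coeff_monomial]
    split_ifs <;> first | rfl | omega

lemma eq_zero_of_polyF_eq_zero {P : Polynomial K} (h : polyF P = 0) : P = 0 := by
  ext n
  simpa [coeff_polyF] using (congrArg (fun x => (toL x).coeff (-n)) h).trans HahnSeries.coeff_zero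

lemma coeff_fracPart (x : FF K) (i : ℤ) :
    (toL (fracPart x)).coeff i = if 1 ≤ i then (toL x).coeff i else 0 := rfl

lemma coeff_intPoly (x : FF K) (n : ℕ) : (intPoly x).coeff n = (toL x).coeff (-(n : ℤ)) := by
  simp only [intPoly, Polynomial.finsetSum_coeff, Polynomial.coeff_monomial]
  rw [Finset.sum_ite_eq' (Finset.range _), ite_eq_left_iff, Finset.mem_range]
  exact fun h => (HahnSeries.coeff_eq_zero_of_lt_order (by omega)).symm

lemma polyF_intPoly_add_fracPart (x : FF K) : polyF (intPoly x) + fracPart x = x := by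
  refine HahnSeries.ext (funext fun i => ?_ : (toL (_ + _)).coeff = (toL x).coeff)
  rw [coeff_toL_add, coeff_polyF, coeff_fracPart, coeff_intPoly]
  rcases le_or_gt i 0 with hi | hi
  · rw [if_pos hi, if_neg (by omega), add_zero, Int.toNat_of_nonneg (by omega), neg_neg]
  · rw [if_neg (by omega), if_pos (by omega), zero_add]

end FractionalPart

section Norm

variable {K : Type*} [Field K] [Fintype K]

lemma fnorm_eq_zpow {x : FF K} (hx : x ≠ 0) :
    fnorm x = (Fintype.card K : ℝ) ^ (-(toL x).order) := by
  rw [fnorm, if_neg (toL_eq_zero.not.mpr hx)]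

lemma one_lt_q : 1 < (Fintype.card K : ℝ) :=
  mod_cast Fintype.one_lt_card

lemma fnorm_zero : fnorm (0 : FF K) = 0 :=
  fnorm_eq_zero.mpr rfl

lemma fnorm_pos {x : FF K} (hx : x ≠ 0) : 0 < fnorm x :=
  (fnorm_nonneg x).lt_of_ne' (fnorm_eq_zero.not.mpr hx)

lemma fnorm_mul (x y : FF K) : fnorm (x * y) = fnorm x * fnorm y := by
  rcases eq_or_ne x 0 with rfl | hx
  · rw [zero_mul, fnorm_zero, zero_mul]
  rcases eq_or_ne y 0 with rfl | hy
  · rw [mul_zero, fnorm_zero, mul_zero]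
  have horder : (toL (x * y)).order = (toL x).order + (toL y).order :=
    HahnSeries.order_mul (x := toL x) (y := toL y) hx hy
  rw [fnorm_eq_zpow hx, fnorm_eq_zpow hy, fnorm_eq_zpow (mul_ne_zero hx hy), horder, neg_add,
    zpow_add₀ (by positivity)]

/-- The norm of `𝔽_q((z⁻¹))` as a bundled absolute value. -/
def fnormAbs : AbsoluteValue (FF K) ℝ where
  toFun := fnorm
  map_mul' := fnorm_mul
  nonneg' := fnorm_nonneg
  eq_zero' _ := fnorm_eq_zero
  add_le' x y := (fnorm_add_le x y).trans
    (max_le_add_of_nonneg (fnorm_nonneg x) (fnorm_nonneg y))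

lemma fnorm_one : fnorm (1 : FF K) = 1 :=
  map_one fnormAbs

lemma fnorm_inv (x : FF K) : fnorm x⁻¹ = (fnorm x)⁻¹ :=
  map_inv₀ fnormAbs x

lemma fnorm_sub_lt {x y : FF K} {r : ℝ} (hx : fnorm x < r) (hy : fnorm y < r) :
    fnorm (x - y) < r := by
  rw [sub_eq_add_neg]
  exact (fnorm_add_le _ _).trans_lt (max_lt hx ((fnorm_neg y).trans_lt hy))

lemma fnorm_add_eq_left_of_lt {x y : FF K} (h : fnorm y < fnorm x) : fnorm (x + y) = fnorm x :=
  IsNonarchimedean.add_eq_left_of_lt (f := fnormAbs) fnorm_add_le h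

lemma fnorm_lt_one_iff {x : FF K} : fnorm x < 1 ↔ ∀ i ≤ 0, (toL x).coeff i = 0 := by
  rcases eq_or_ne x 0 with rfl | hx
  · simp [fnorm_zero]
  rw [fnorm_eq_zpow hx, zpow_lt_one_iff_right₀ one_lt_q, neg_lt_zero]
  refine ⟨fun h i hi => HahnSeries.coeff_eq_zero_of_lt_order (hi.trans_lt h), fun h => ?_⟩
  by_contra! horder
  exact hx (HahnSeries.coeff_order_eq_zero.mp (h _ horder))

lemma two_le_fnorm_of_one_lt {x : FF K} (hx : 1 < fnorm x) : 2 ≤ fnorm x := by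
  have hx0 : x ≠ 0 := fun h => by norm_num [h, fnorm_zero] at hx
  rw [fnorm_eq_zpow hx0] at hx ⊢
  calc (2 : ℝ) ≤ Fintype.card K := mod_cast Fintype.one_lt_card
    _ = (Fintype.card K : ℝ) ^ (1 : ℤ) := (zpow_one _).symm
    _ ≤ (Fintype.card K : ℝ) ^ (-(toL x).order) :=
      zpow_le_zpow_right₀ one_le_q ((one_lt_zpow_iff_right₀ one_lt_q).mp hx)

lemma fnorm_fracPart_lt_one (x : FF K) : fnorm (fracPart x) < 1 :=
  fnorm_lt_one_iff.mpr fun i hi => by rw [coeff_fracPart, if_neg (by omega)]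

lemma eq_zero_of_fnorm_polyF_lt_one {P : Polynomial K} (h : fnorm (polyF P) < 1) : P = 0 := by
  ext n
  simpa [coeff_polyF] using fnorm_lt_one_iff.mp h (-n) (by omega)

lemma one_le_fnorm_polyF {P : Polynomial K} (hP : P ≠ 0) : 1 ≤ fnorm (polyF P) :=
  le_of_not_gt fun h => hP (eq_zero_of_fnorm_polyF_lt_one h)

lemma fnorm_polyF_le_of_dvd {P Q : Polynomial K} (hPQ : P ∣ Q) (hQ : Q ≠ 0) :
    fnorm (polyF P) ≤ fnorm (polyF Q) := by
  obtain ⟨R, rfl⟩ := hPQ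
  rw [polyF_mul, fnorm_mul]
  exact le_mul_of_one_le_right (fnorm_nonneg _) (one_le_fnorm_polyF (right_ne_zero_of_mul hQ))

lemma fracPart_eq_sub {x : FF K} {P : Polynomial K} (h : fnorm (x - polyF P) < 1) :
    fracPart x = x - polyF P := by
  have hsplit := polyF_intPoly_add_fracPart x
  have hdiff : polyF (P - intPoly x) = fracPart x - (x - polyF P) := by
    rw [polyF_sub]
    linear_combination -hsplit
  have hP : P - intPoly x = 0 := eq_zero_of_fnorm_polyF_lt_one <|
    hdiff ▸ fnorm_sub_lt (fnorm_fracPart_lt_one x) h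
  rw [hP, polyF_zero] at hdiff
  exact sub_eq_zero.mp hdiff.symm

end Norm

section ContinuedFraction

variable {K : Type*} [Field K] {α : FF K}

lemma FIrrational.ne_zero (hirr : FIrrational α) : α ≠ 0 := by
  rintro rfl
  exact hirr 0 1 one_ne_zero (by rw [polyF_zero, zero_mul])

lemma firrational_gaussMap (hirr : FIrrational α) : FIrrational (gaussMap α) := by
  intro P Q hQ hPQ
  have hinv : α * (polyF (intPoly α⁻¹) + gaussMap α) = 1 := by
    rw [gaussMap, polyF_intPoly_add_fracPart, mul_inv_cancel₀ hirr.ne_zero]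
  have hα : α * polyF (intPoly α⁻¹ * Q + P) = polyF Q := by
    rw [polyF_add, polyF_mul, ← hPQ]
    linear_combination polyF Q * hinv
  refine hirr _ _ (fun h => hQ (eq_zero_of_polyF_eq_zero ?_)) hα
  rw [← hα, h, polyF_zero, mul_zero]

lemma iterate_gaussMap_ne_zero (hirr : FIrrational α) (k : ℕ) : gaussMap^[k] α ≠ 0 :=
  (Function.Iterate.rec FIrrational hirr (fun _ => firrational_gaussMap) k).ne_zero

lemma inv_iterate_gaussMap (α : FF K) (k : ℕ) :
    (gaussMap^[k] α)⁻¹ = polyF (pquot α k) + gaussMap^[k + 1] α := by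
  rw [Function.iterate_succ_apply', gaussMap, pquot, polyF_intPoly_add_fracPart]

/-- The numerator `P_k` of the `k`-th convergent `P_k / Q_k` of `α ∈ 𝕀`. -/
def cfP (α : FF K) : ℕ → Polynomial K
  | 0 => 0
  | 1 => 1
  | (k + 2) => pquot α (k + 1) * cfP α (k + 1) + cfP α k

/-- The approximation error `Q_k α - P_k` of the `k`-th convergent of `α`. -/
def cfErr (α : FF K) (k : ℕ) : FF K := polyF (cfQ α k) * α - polyF (cfP α k)

lemma cfP_succ_mul_cfQ_sub (α : FF K) (k : ℕ) :
    cfP α (k + 1) * cfQ α k - cfP α k * cfQ α (k + 1) = (-1) ^ k := by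
  induction k with
  | zero => simp [cfP, cfQ]
  | succ k ih =>
    rw [cfP, cfQ, pow_succ]
    linear_combination -ih

lemma isCoprime_cfQ_cfP_succ (α : FF K) (k : ℕ) : IsCoprime (cfQ α (k + 1)) (cfP α (k + 1)) :=
  ⟨-(-1) ^ k * cfP α k, (-1) ^ k * cfQ α k, by
    have hsign : ((-1) ^ k * (-1) ^ k : Polynomial K) = 1 := by
      rw [← mul_pow, neg_one_mul, neg_neg, one_pow]
    linear_combination (-1) ^ k * cfP_succ_mul_cfQ_sub α k + hsign⟩

lemma cfErr_succ (hirr : FIrrational α) (k : ℕ) :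
    cfErr α (k + 1) = -gaussMap^[k + 1] α * cfErr α k := by
  induction k with
  | zero =>
    have hinv := inv_iterate_gaussMap α 0
    have hα := mul_inv_cancel₀ hirr.ne_zero
    simp only [cfErr, cfQ, cfP, polyF_one, polyF_zero, Function.iterate_zero, id] at hinv ⊢
    linear_combination hα - α * hinv
  | succ k ih =>
    have hrec : cfErr α (k + 2) = polyF (pquot α (k + 1)) * cfErr α (k + 1) + cfErr α k := by
      simp only [cfErr, cfQ, cfP, polyF_add, polyF_mul]
      ring
    have hinv := inv_iterate_gaussMap α (k + 1)
    have hT := mul_inv_cancel₀ (iterate_gaussMap_ne_zero hirr (k + 1))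
    rw [hrec]
    linear_combination (gaussMap^[k + 1] α)⁻¹ * ih - cfErr α k * hT - cfErr α (k + 1) * hinv

variable [Fintype K]

lemma fnorm_iterate_gaussMap_lt_one (hα : fnorm α < 1) (k : ℕ) : fnorm (gaussMap^[k] α) < 1 :=
  Function.Iterate.rec (fnorm · < 1) hα (fun x _ => fnorm_fracPart_lt_one x⁻¹) k

lemma one_lt_fnorm_inv_iterate_gaussMap (hα : fnorm α < 1) (hirr : FIrrational α) (k : ℕ) :
    1 < fnorm (gaussMap^[k] α)⁻¹ := by
  rw [fnorm_inv, one_lt_inv₀ (fnorm_pos (iterate_gaussMap_ne_zero hirr k))]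
  exact fnorm_iterate_gaussMap_lt_one hα k

lemma fnorm_pquot (hα : fnorm α < 1) (hirr : FIrrational α) (k : ℕ) :
    fnorm (polyF (pquot α k)) = fnorm (gaussMap^[k] α)⁻¹ := by
  rw [eq_sub_of_add_eq (inv_iterate_gaussMap α k).symm, sub_eq_add_neg, fnorm_add_eq_left_of_lt]
  rw [fnorm_neg]
  exact (fnorm_iterate_gaussMap_lt_one hα (k + 1)).trans
    (one_lt_fnorm_inv_iterate_gaussMap hα hirr k)

lemma two_le_fnorm_pquot (hα : fnorm α < 1) (hirr : FIrrational α) (k : ℕ) :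
    2 ≤ fnorm (polyF (pquot α k)) :=
  two_le_fnorm_of_one_lt <|
    (one_lt_fnorm_inv_iterate_gaussMap hα hirr k).trans_eq (fnorm_pquot hα hirr k).symm

lemma fnorm_cfQ_zero (α : FF K) : fnorm (polyF (cfQ α 0)) = 1 := by
  rw [cfQ, polyF_one, fnorm_one]

lemma fnorm_cfQ_succ (hα : fnorm α < 1) (hirr : FIrrational α) (k : ℕ) :
    fnorm (polyF (cfQ α (k + 1))) = fnorm (polyF (pquot α k)) * fnorm (polyF (cfQ α k)) := by
  suffices h : 0 < fnorm (polyF (cfQ α k)) ∧ fnorm (polyF (cfQ α (k + 1))) =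
      fnorm (polyF (pquot α k)) * fnorm (polyF (cfQ α k)) from h.2
  induction k with
  | zero => rw [fnorm_cfQ_zero, mul_one]; exact ⟨one_pos, rfl⟩
  | succ k ih =>
    obtain ⟨hpos, hsucc⟩ := ih
    have hlt : fnorm (polyF (cfQ α k)) < fnorm (polyF (cfQ α (k + 1))) :=
      hsucc ▸ lt_mul_of_one_lt_left hpos (one_lt_two.trans_le (two_le_fnorm_pquot hα hirr k))
    have hpos' := hpos.trans hlt
    refine ⟨hpos', ?_⟩
    rw [cfQ, polyF_add, polyF_mul, fnorm_add_eq_left_of_lt, fnorm_mul]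
    rw [fnorm_mul]
    exact hlt.trans
      (lt_mul_of_one_lt_left hpos' (one_lt_two.trans_le (two_le_fnorm_pquot hα hirr (k + 1))))

lemma two_mul_fnorm_cfQ_le_succ (hα : fnorm α < 1) (hirr : FIrrational α) (k : ℕ) :
    2 * fnorm (polyF (cfQ α k)) ≤ fnorm (polyF (cfQ α (k + 1))) := by
  rw [fnorm_cfQ_succ hα hirr]
  exact mul_le_mul_of_nonneg_right (two_le_fnorm_pquot hα hirr k) (fnorm_nonneg _)

lemma fnorm_cfErr_mul_fnorm_cfQ_succ (hα : fnorm α < 1) (hirr : FIrrational α) (k : ℕ) :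
    fnorm (cfErr α k) * fnorm (polyF (cfQ α (k + 1))) = 1 := by
  induction k with
  | zero =>
    rw [fnorm_cfQ_succ hα hirr, fnorm_pquot hα hirr, fnorm_cfQ_zero, mul_one, ← fnorm_mul]
    simp [cfErr, cfQ, cfP, polyF_one, polyF_zero, mul_inv_cancel₀ hirr.ne_zero, fnorm_one]
  | succ k ih =>
    have hT := fnorm_pos (iterate_gaussMap_ne_zero hirr (k + 1))
    rw [cfErr_succ hirr, fnorm_cfQ_succ hα hirr, fnorm_pquot hα hirr, fnorm_mul, fnorm_neg,
      fnorm_inv, mul_mul_mul_comm, mul_inv_cancel₀ hT.ne', one_mul, ih]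

lemma fracPart_cfQ_mul (hα : fnorm α < 1) (hirr : FIrrational α) (k : ℕ) :
    fracPart (polyF (cfQ α k) * α) = cfErr α k := by
  refine fracPart_eq_sub (lt_of_not_ge fun h : 1 ≤ fnorm (cfErr α k) => ?_)
  have hone := fnorm_cfErr_mul_fnorm_cfQ_succ hα hirr k
  have hQ := one_le_of_two_mul_le_succ (X := fun k => fnorm (polyF (cfQ α k)))
    (fnorm_cfQ_zero α).ge (two_mul_fnorm_cfQ_le_succ hα hirr) k
  nlinarith [two_mul_fnorm_cfQ_le_succ hα hirr k]

lemma one_le_fnorm_fracPart_mul_fnorm_cfQ_succ (hα : fnorm α < 1) (hirr : FIrrational α) {k : ℕ}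
    {Q : Polynomial K} (hQ : Q ≠ 0) (hQk : fnorm (polyF Q) < fnorm (polyF (cfQ α (k + 1)))) :
    1 ≤ fnorm (fracPart (polyF Q * α)) * fnorm (polyF (cfQ α (k + 1))) := by
  -- If `Q` violates the bound, then the polynomial `Q P_{k+1} - [Q α] Q_{k+1}`, which equals
  -- `{Q α} Q_{k+1} - Q (Q_{k+1} α - P_{k+1})`, has norm less than `1` and so is zero; hence
  -- `Q_{k+1}` divides `Q`.
  by_contra! hsmall
  have hcross : polyF (Q * cfP α (k + 1) - intPoly (polyF Q * α) * cfQ α (k + 1)) =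
      fracPart (polyF Q * α) * polyF (cfQ α (k + 1)) - polyF Q * cfErr α (k + 1) := by
    rw [polyF_sub, polyF_mul, polyF_mul, cfErr]
    linear_combination -polyF (cfQ α (k + 1)) * polyF_intPoly_add_fracPart (polyF Q * α)
  have herr : fnorm (polyF Q * cfErr α (k + 1)) < 1 := by
    have hone := fnorm_cfErr_mul_fnorm_cfQ_succ hα hirr (k + 1)
    have hpos : 0 < fnorm (cfErr α (k + 1)) :=
      (fnorm_nonneg _).lt_of_ne' (left_ne_zero_of_mul_eq_one hone)
    rw [fnorm_mul, mul_comm, ← hone]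
    gcongr
    linarith [two_mul_fnorm_cfQ_le_succ hα hirr (k + 1), fnorm_nonneg (polyF Q)]
  have hzero : Q * cfP α (k + 1) - intPoly (polyF Q * α) * cfQ α (k + 1) = 0 :=
    eq_zero_of_fnorm_polyF_lt_one (hcross ▸ fnorm_sub_lt ((fnorm_mul _ _).trans_lt hsmall) herr)
  have hdvd : cfQ α (k + 1) ∣ Q :=
    (isCoprime_cfQ_cfP_succ α k).dvd_of_dvd_mul_right
      ⟨intPoly (polyF Q * α), by linear_combination hzero⟩
  exact hQk.not_ge (fnorm_polyF_le_of_dvd hdvd hQ)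

lemma exists_fnorm_le_and_fnorm_fracPart_le_iff (hα : fnorm α < 1) (hirr : FIrrational α)
    (c : ℝ) (l : ℕ) :
    (∃ Q : Polynomial K, Q ≠ 0 ∧ fnorm (polyF Q) ≤ 2 ^ l ∧
        fnorm (fracPart (polyF Q * α)) ≤ c / 2 ^ l) ↔
      l ∈ dyadicGaps (fun k => fnorm (polyF (cfQ α k))) c := by
  set X := fun k => fnorm (polyF (cfQ α k))
  have hX0 : X 0 = 1 := fnorm_cfQ_zero α
  have hX : ∀ k, 2 * X k ≤ X (k + 1) := two_mul_fnorm_cfQ_le_succ hα hirr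
  have hXpos : ∀ k, 0 < X k := fun k => one_pos.trans_le (one_le_of_two_mul_le_succ hX0.ge hX k)
  constructor
  · rintro ⟨Q, hQ, hQl, hfrac⟩
    obtain ⟨k, hkQ, hQk⟩ := exists_le_and_lt_succ (a := X)
      (hX0.trans_le (one_le_fnorm_polyF hQ)) ((tendsto_atTop_of_geom_le (hXpos 0) one_lt_two
        hX).eventually_gt_atTop (fnorm (polyF Q))).exists
    refine ⟨k, hkQ.trans hQl, ?_⟩
    have hbest := (one_le_fnorm_fracPart_mul_fnorm_cfQ_succ hα hirr hQ hQk).trans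
      (mul_le_mul_of_nonneg_right hfrac (hXpos (k + 1)).le)
    rwa [div_mul_eq_mul_div, one_le_div (by positivity)] at hbest
  · rintro ⟨k, hkl, hlk⟩
    refine ⟨cfQ α k, fun h => (hXpos k).ne' ?_, hkl, ?_⟩
    · simp only [X, h, polyF_zero, fnorm_zero]
    · rw [fracPart_cfQ_mul hα hirr,
        eq_one_div_of_mul_eq_one_left (fnorm_cfErr_mul_fnorm_cfQ_succ hα hirr k),
        div_le_div_iff₀ (hXpos _) (by positivity), one_mul]
      exact hlk

lemma singularOnAverage_iff (hα : fnorm α < 1) (hirr : FIrrational α) :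
    SingularOnAverage α ↔
      ∀ c > 0, HasZeroDensity (dyadicGaps (fun k => fnorm (polyF (cfQ α k))) c)ᶜ := by
  refine forall₂_congr fun c _ => ?_
  simp only [exists_fnorm_le_and_fnorm_fracPart_le_iff hα hirr]
  exact tendsto_card_filter_div_iff_hasZeroDensity_compl _

end ContinuedFraction

end FPSDA

/-- (Theorem 10.1 of the paper.) An irrational `α ∈ 𝕀` is singular on average if and only
if `‖Q_k‖^{1/k} → ∞`, where `(Q_k)` are the denominators of the continued fraction
convergents of `α`. -/
theorem singular_on_average_iff_growth {K : Type*} [Field K] [Fintype K]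
    (α : FF K) (hα : fnorm α < 1) (hirr : FIrrational α) :
    SingularOnAverage α ↔
      Filter.Tendsto (fun k : ℕ => fnorm (polyF (cfQ α k)) ^ (1 / (k : ℝ)))
        Filter.atTop Filter.atTop := by
  have hX0 := fnorm_cfQ_zero α
  have hX := two_mul_fnorm_cfQ_le_succ hα hirr
  calc SingularOnAverage α
    _ ↔ ∀ c > 0, HasZeroDensity (dyadicGaps (fun k => fnorm (polyF (cfQ α k))) c)ᶜ :=
      singularOnAverage_iff hα hirr
    _ ↔ HasZeroDensity (Set.range fun k => dyadicExponent (fnorm (polyF (cfQ α k)))) :=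
      forall_hasZeroDensity_compl_dyadicGaps_iff hX0 hX
    _ ↔ (fun k : ℕ => (k : ℝ)) =o[atTop]
          fun k => (dyadicExponent (fnorm (polyF (cfQ α k))) : ℝ) :=
      hasZeroDensity_range_iff (strictMono_dyadicExponent hX0.ge hX)
    _ ↔ Tendsto (fun k : ℕ => fnorm (polyF (cfQ α k)) ^ (1 / (k : ℝ))) atTop atTop :=
      isLittleO_dyadicExponent_iff_tendsto_rpow hX0.ge hX
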